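/- Let E be a C*-ternary ring and F a closed ideal of E. Then the quotient space E/F, equipped with the induced ternary product and the quotient norm ‖x + F‖ = inf{‖x + f‖ : f ∈ F}, is a C*-ternary ring; in particular the quotient norm is a C*-norm for the induced ternary product. -/

import Mathlib

noncomputable section

open scoped ComplexConjugate

/-- The axioms of a `*`-ternary ring (`*`-tring) structure on a complex vector
space: `μ` is linear in the odd variables, conjugate-linear in the middle one,
and satisfies the ternary associativity identities. -/
def IsTernaryProduct {E : Type*} [AddCommGroup E] [Module ℂ E]
    (μ : E → E → E → E) : Prop :=
  (∀ x x' y z : E, μ (x + x') y z = μ x y z + μ x' y z) ∧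
  (∀ (c : ℂ) (x y z : E), μ (c • x) y z = c • μ x y z) ∧
  (∀ x y y' z : E, μ x (y + y') z = μ x y z + μ x y' z) ∧
  (∀ (c : ℂ) (x y z : E), μ x (c • y) z = conj c • μ x y z) ∧
  (∀ x y z z' : E, μ x y (z + z') = μ x y z + μ x y z') ∧
  (∀ (c : ℂ) (x y z : E), μ x y (c • z) = c • μ x y z) ∧
  (∀ x y z u v : E, μ (μ x y z) u v = μ x (μ u z y) v) ∧
  (∀ x y z u v : E, μ x (μ u z y) v = μ x y (μ z u v))

/-!
Adjointable operators on a `C*`-ternary ring `E` form a `C*`-algebra `A` containing the self-adjoint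
left multiplications `l x = μ x x ·`, which satisfy `‖l x‖ = ‖x‖ ^ 2` and `l (T x) = T * l x * T⋆`;
in particular `l (μ x x x) = l x ^ 3`. If `w` and `μ x x x` agree modulo `F`, then
`j = l (μ x x x) - l w` maps `E` into `F`, and the functional calculus of `j` gives a self-adjoint
contraction `e` with `1 - e ∈ j * A` and `j * e` small. So `e x` represents the class of `x`, while
`‖e x‖ ^ 6 ≤ ‖l x ^ 3 * e‖ ≤ ‖l w‖ + ‖j * e‖`, whence `‖x + F‖ ^ 3 ≤ ‖w‖`.
-/

open Filter Topology

namespace IsTernaryProduct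

variable {E : Type*} [AddCommGroup E] [Module ℂ E] {μ : E → E → E → E}

lemma add_left (h : IsTernaryProduct μ) (x x' y z : E) : μ (x + x') y z = μ x y z + μ x' y z :=
  h.1 x x' y z

lemma smul_left (h : IsTernaryProduct μ) (c : ℂ) (x y z : E) : μ (c • x) y z = c • μ x y z :=
  h.2.1 c x y z

lemma add_middle (h : IsTernaryProduct μ) (x y y' z : E) : μ x (y + y') z = μ x y z + μ x y' z :=
  h.2.2.1 x y y' z

lemma smul_middle (h : IsTernaryProduct μ) (c : ℂ) (x y z : E) :
    μ x (c • y) z = conj c • μ x y z :=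
  h.2.2.2.1 c x y z

lemma add_right (h : IsTernaryProduct μ) (x y z z' : E) : μ x y (z + z') = μ x y z + μ x y z' :=
  h.2.2.2.2.1 x y z z'

lemma smul_right (h : IsTernaryProduct μ) (c : ℂ) (x y z : E) : μ x y (c • z) = c • μ x y z :=
  h.2.2.2.2.2.1 c x y z

lemma assoc_left (h : IsTernaryProduct μ) (x y z u v : E) :
    μ (μ x y z) u v = μ x (μ u z y) v :=
  h.2.2.2.2.2.2.1 x y z u v

lemma assoc_right (h : IsTernaryProduct μ) (x y z u v : E) :
    μ x (μ u z y) v = μ x y (μ z u v) :=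
  h.2.2.2.2.2.2.2 x y z u v

lemma sub_left (h : IsTernaryProduct μ) (x x' y z : E) : μ (x - x') y z = μ x y z - μ x' y z :=
  map_sub (AddMonoidHom.mk' (μ · y z) (h.add_left · · y z)) x x'

lemma sub_middle (h : IsTernaryProduct μ) (x y y' z : E) : μ x (y - y') z = μ x y z - μ x y' z :=
  map_sub (AddMonoidHom.mk' (μ x · z) (h.add_middle x · · z)) y y'

lemma sub_right (h : IsTernaryProduct μ) (x y z z' : E) : μ x y (z - z') = μ x y z - μ x y z' :=
  map_sub (AddMonoidHom.mk' (μ x y ·) (h.add_right x y)) z z'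

lemma of_surjective {E' : Type*} [AddCommGroup E'] [Module ℂ E'] {μ' : E' → E' → E' → E'}
    (h : IsTernaryProduct μ) {π : E →ₗ[ℂ] E'} (hπ : Function.Surjective π)
    (hμ : ∀ x y z, μ' (π x) (π y) (π z) = π (μ x y z)) : IsTernaryProduct μ' := by
  simp only [IsTernaryProduct, hπ.forall, ← map_add, ← map_smul, hμ, h.add_left, h.smul_left,
    h.add_middle, h.smul_middle, h.add_right, h.smul_right, h.assoc_left, h.assoc_right,
    implies_true, and_self]

end IsTernaryProduct

/-- A `C*`-ternary product: the ternary ring axioms together with the two `C*`-norm conditions.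
Only a seminorm is assumed and completeness is not included, so that the notion also makes sense
for the quotient by a subspace before that is known to be closed. -/
structure IsCStarTernaryProduct {E : Type*} [SeminormedAddCommGroup E] [NormedSpace ℂ E]
    (μ : E → E → E → E) : Prop where
  isTernaryProduct : IsTernaryProduct μ
  norm_le (x y z : E) : ‖μ x y z‖ ≤ ‖x‖ * ‖y‖ * ‖z‖
  norm_cube (x : E) : ‖μ x x x‖ = ‖x‖ ^ 3

/-- `T` and `S` are adjoint to each other for the ternary product `μ`. -/
def IsTernaryAdjointPair {E : Type*} [SeminormedAddCommGroup E] [NormedSpace ℂ E]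
    (μ : E → E → E → E) (T S : E →L[ℂ] E) : Prop :=
  ∀ x y z, μ x (T y) z = μ x y (S z)

lemma opNorm_pow_le_of_forall_norm_apply_pow_le {𝕜 E E' : Type*} [NontriviallyNormedField 𝕜]
    [SeminormedAddCommGroup E] [NormedSpace 𝕜 E] [SeminormedAddCommGroup E'] [NormedSpace 𝕜 E']
    (T : E →L[𝕜] E') {n : ℕ} (hn : n ≠ 0) {C : ℝ} (hC : 0 ≤ C)
    (h : ∀ x, ‖T x‖ ^ n ≤ C * ‖x‖ ^ n) : ‖T‖ ^ n ≤ C := by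
  have root_pow : (C ^ (n⁻¹ : ℝ)) ^ n = C := Real.rpow_inv_natCast_pow hC hn
  have norm_le_root : ‖T‖ ≤ C ^ (n⁻¹ : ℝ) :=
    T.opNorm_le_bound (by positivity) fun x =>
      le_of_pow_le_pow_left₀ hn (by positivity) (by rw [mul_pow, root_pow]; exact h x)
  calc ‖T‖ ^ n ≤ (C ^ (n⁻¹ : ℝ)) ^ n := by gcongr
    _ = C := root_pow

namespace IsTernaryAdjointPair

variable {E : Type*} [SeminormedAddCommGroup E] [NormedSpace ℂ E] {μ : E → E → E → E}
  {T S T' S' : E →L[ℂ] E}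

lemma one : IsTernaryAdjointPair μ 1 1 := fun _ _ _ => rfl

lemma mul (h : IsTernaryAdjointPair μ T S) (h' : IsTernaryAdjointPair μ T' S') :
    IsTernaryAdjointPair μ (T * T') (S' * S) := fun x y z =>
  (h x (T' y) z).trans (h' x y (S z))

lemma add (hμ : IsTernaryProduct μ) (h : IsTernaryAdjointPair μ T S)
    (h' : IsTernaryAdjointPair μ T' S') : IsTernaryAdjointPair μ (T + T') (S + S') :=
  fun x y z => by
    simp only [add_apply, hμ.add_middle, hμ.add_right, h x y z, h' x y z]

lemma smul (hμ : IsTernaryProduct μ) (c : ℂ) (h : IsTernaryAdjointPair μ T S) :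
    IsTernaryAdjointPair μ (c • T) (conj c • S) := fun x y z => by
  simp only [smul_apply, hμ.smul_middle, hμ.smul_right, h x y z]

end IsTernaryAdjointPair

namespace IsCStarTernaryProduct

section Continuity

variable {E : Type*} [SeminormedAddCommGroup E] [NormedSpace ℂ E] {μ : E → E → E → E}

lemma continuous_middle (H : IsCStarTernaryProduct μ) (x z : E) : Continuous (μ x · z) :=
  AddMonoidHomClass.continuous_of_bound
    (AddMonoidHom.mk' (μ x · z) (H.isTernaryProduct.add_middle x · · z)) (‖x‖ * ‖z‖)
    fun y => (H.norm_le x y z).trans_eq (mul_right_comm _ _ _)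

lemma continuous_right (H : IsCStarTernaryProduct μ) (x y : E) : Continuous (μ x y ·) :=
  AddMonoidHomClass.continuous_of_bound
    (AddMonoidHom.mk' (μ x y ·) (H.isTernaryProduct.add_right x y)) (‖x‖ * ‖y‖) (H.norm_le x y)

end Continuity

variable {E : Type*} [NormedAddCommGroup E] [NormedSpace ℂ E] {μ : E → E → E → E}

lemma eq_zero_of_cube_eq_zero (H : IsCStarTernaryProduct μ) {x : E} (hx : μ x x x = 0) :
    x = 0 := by
  have norm_cube_eq_zero : ‖x‖ ^ 3 = 0 := by rw [← H.norm_cube, hx, norm_zero]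
  exact norm_eq_zero.mp (pow_eq_zero_iff three_ne_zero |>.mp norm_cube_eq_zero)

lemma ext_left (H : IsCStarTernaryProduct μ) {a b : E} (hab : ∀ y z, μ a y z = μ b y z) :
    a = b :=
  sub_eq_zero.mp <| H.eq_zero_of_cube_eq_zero <| by
    rw [H.isTernaryProduct.sub_left, hab, sub_self]

lemma ext_right (H : IsCStarTernaryProduct μ) {a b : E} (hab : ∀ x y, μ x y a = μ x y b) :
    a = b :=
  sub_eq_zero.mp <| H.eq_zero_of_cube_eq_zero <| by
    rw [H.isTernaryProduct.sub_right, hab, sub_self]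

end IsCStarTernaryProduct

namespace IsTernaryAdjointPair

variable {E : Type*} [NormedAddCommGroup E] [NormedSpace ℂ E] {μ : E → E → E → E}
  {T S S' : E →L[ℂ] E}

lemma symm (H : IsCStarTernaryProduct μ) (h : IsTernaryAdjointPair μ T S) :
    IsTernaryAdjointPair μ S T := fun x y z =>
  H.ext_left fun b c => by
    rw [H.isTernaryProduct.assoc_left, ← h, ← H.isTernaryProduct.assoc_left]

lemma right_unique (H : IsCStarTernaryProduct μ) (h : IsTernaryAdjointPair μ T S)
    (h' : IsTernaryAdjointPair μ T S') : S = S' :=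
  ContinuousLinearMap.ext fun z => H.ext_right fun x y => by rw [← h x y z, ← h' x y z]

lemma apply_ternary (H : IsCStarTernaryProduct μ) (h : IsTernaryAdjointPair μ T S) (x y z : E) :
    T (μ x y z) = μ (T x) y z :=
  H.ext_right fun u v => by
    rw [← h.symm H, ← H.isTernaryProduct.assoc_right, ← H.isTernaryProduct.assoc_left,
      h.symm H, H.isTernaryProduct.assoc_left, H.isTernaryProduct.assoc_right]

lemma isClosed_setOf (H : IsCStarTernaryProduct μ) :
    IsClosed {p : (E →L[ℂ] E) × (E →L[ℂ] E) | IsTernaryAdjointPair μ p.1 p.2} := by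
  simp only [IsTernaryAdjointPair, Set.ofPred_forall]
  refine isClosed_iInter fun x => isClosed_iInter fun y => isClosed_iInter fun z => ?_
  exact isClosed_eq ((H.continuous_middle x z).comp (by fun_prop))
    ((H.continuous_right x y).comp (by fun_prop))

lemma norm_mul_self_le (H : IsCStarTernaryProduct μ) (h : IsTernaryAdjointPair μ T S) :
    ‖T‖ * ‖T‖ ≤ ‖S * T‖ := by
  have norm_apply_cube_le (x : E) : ‖T x‖ ^ 3 ≤ ‖T‖ * ‖S * T‖ * ‖x‖ ^ 3 :=
    calc ‖T x‖ ^ 3 = ‖T (μ x x ((S * T) x))‖ := by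
          rw [← H.norm_cube, ← h.apply_ternary H, h]; rfl
      _ ≤ ‖T‖ * (‖x‖ * ‖x‖ * (‖S * T‖ * ‖x‖)) := by
          refine T.le_opNorm_of_le ((H.norm_le _ _ _).trans ?_)
          gcongr
          exact (S * T).le_opNorm x
      _ = ‖T‖ * ‖S * T‖ * ‖x‖ ^ 3 := by ring
  have norm_cube_le : ‖T‖ ^ 3 ≤ ‖T‖ * ‖S * T‖ :=
    opNorm_pow_le_of_forall_norm_apply_pow_le T three_ne_zero (by positivity) norm_apply_cube_le
  rcases (norm_nonneg T).eq_or_lt with hT | hT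
  · rw [← hT, zero_mul]
    exact norm_nonneg _
  · refine le_of_mul_le_mul_left ?_ hT
    linarith

end IsTernaryAdjointPair

namespace IsCStarTernaryProduct

variable {E : Type*} [NormedAddCommGroup E] [NormedSpace ℂ E] {μ : E → E → E → E}

/-- The algebra of adjointable operators of a `C*`-ternary product, a subalgebra of the bounded
operators whose involution sends an operator to its (unique) adjoint. -/
def adjointable (H : IsCStarTernaryProduct μ) : Subalgebra ℂ (E →L[ℂ] E) where
  carrier := {T | ∃ S, IsTernaryAdjointPair μ T S}
  mul_mem' := fun ⟨_, h⟩ ⟨_, h'⟩ => ⟨_, h.mul h'⟩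
  add_mem' := fun ⟨_, h⟩ ⟨_, h'⟩ => ⟨_, h.add H.isTernaryProduct h'⟩
  algebraMap_mem' c := by
    rw [Algebra.algebraMap_eq_smul_one]
    exact ⟨_, IsTernaryAdjointPair.one.smul H.isTernaryProduct c⟩

variable {H : IsCStarTernaryProduct μ}

-- Pins down the ring structure over which the `Star` hierarchy below is declared.
instance : NormedRing H.adjointable := inferInstance

instance : Star H.adjointable where
  star T := ⟨T.2.choose, T.1, T.2.choose_spec.symm H⟩

lemma isTernaryAdjointPair_star (T : H.adjointable) : IsTernaryAdjointPair μ T.1 (star T).1 :=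
  T.2.choose_spec

lemma star_eq_of_isTernaryAdjointPair {T S : H.adjointable}
    (h : IsTernaryAdjointPair μ T.1 S.1) : star T = S :=
  Subtype.ext ((isTernaryAdjointPair_star T).right_unique H h)

instance : StarRing H.adjointable where
  star_involutive T :=
    star_eq_of_isTernaryAdjointPair ((isTernaryAdjointPair_star T).symm H)
  star_mul T S :=
    star_eq_of_isTernaryAdjointPair
      ((isTernaryAdjointPair_star T).mul (isTernaryAdjointPair_star S))
  star_add T S :=
    star_eq_of_isTernaryAdjointPair
      ((isTernaryAdjointPair_star T).add H.isTernaryProduct (isTernaryAdjointPair_star S))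

instance : StarModule ℂ H.adjointable where
  star_smul c T :=
    star_eq_of_isTernaryAdjointPair ((isTernaryAdjointPair_star T).smul H.isTernaryProduct c)

instance : CStarRing H.adjointable where
  norm_mul_self_le T := (isTernaryAdjointPair_star T).norm_mul_self_le H

instance [CompleteSpace E] : CompleteSpace H.adjointable := by
  let graph (T : H.adjointable) : (E →L[ℂ] E) × (E →L[ℂ] E) := (T.1, (star T).1)
  have isometry_graph : Isometry graph := Isometry.of_dist_eq fun T S =>
    (congrArg (max (dist T S)) (star_isometry.dist_eq T S)).trans (max_self _)
  have range_graph : Set.range graph = {p | IsTernaryAdjointPair μ p.1 p.2} := by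
    ext ⟨T, S⟩
    refine ⟨?_, fun h => ⟨⟨T, S, h⟩, ?_⟩⟩
    · rintro ⟨T, hT⟩
      exact hT ▸ isTernaryAdjointPair_star T
    · have star_eq : star (⟨T, S, h⟩ : H.adjointable) = ⟨S, T, h.symm H⟩ :=
        star_eq_of_isTernaryAdjointPair h
      simp only [graph, star_eq]
  refine isometry_graph.isUniformInducing.completeSpace ?_
  rw [range_graph]
  exact (IsTernaryAdjointPair.isClosed_setOf H).isComplete

instance [CompleteSpace E] : CStarAlgebra H.adjointable where

/-- The operator `z ↦ μ x y z` as an adjointable operator, with adjoint `leftMul y x`. -/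
def leftMul (H : IsCStarTernaryProduct μ) (x y : E) : H.adjointable :=
  let L (x y : E) : E →L[ℂ] E := LinearMap.mkContinuous
    { toFun := μ x y
      map_add' := H.isTernaryProduct.add_right x y
      map_smul' := fun c => H.isTernaryProduct.smul_right c x y }
    (‖x‖ * ‖y‖) (H.norm_le x y)
  ⟨L x y, L y x, fun a b c => H.isTernaryProduct.assoc_right a b y x c⟩

@[simp]
lemma leftMul_apply (x y z : E) : (H.leftMul x y).1 z = μ x y z := rfl

lemma norm_leftMul_le (x y : E) : ‖H.leftMul x y‖ ≤ ‖x‖ * ‖y‖ :=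
  LinearMap.mkContinuous_norm_le _ (by positivity) (H.norm_le x y)

lemma norm_leftMul_self (x : E) : ‖H.leftMul x x‖ = ‖x‖ ^ 2 := by
  refine le_antisymm ((norm_leftMul_le x x).trans_eq (sq _).symm) ?_
  rcases (norm_nonneg x).eq_or_lt with hx | hx
  · rw [← hx, zero_pow two_ne_zero]
    exact norm_nonneg _
  · refine le_of_mul_le_mul_right ?_ hx
    calc ‖x‖ ^ 2 * ‖x‖ = ‖(H.leftMul x x).1 x‖ := by rw [leftMul_apply, H.norm_cube, ← pow_succ]
      _ ≤ ‖H.leftMul x x‖ * ‖x‖ := (H.leftMul x x).1.le_opNorm x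

lemma star_leftMul (x y : E) : star (H.leftMul x y) = H.leftMul y x :=
  star_eq_of_isTernaryAdjointPair fun a b c => H.isTernaryProduct.assoc_right a b y x c

lemma isSelfAdjoint_leftMul_self (x : E) : IsSelfAdjoint (H.leftMul x x) := star_leftMul x x

lemma leftMul_apply_apply (T : H.adjointable) (x y : E) :
    H.leftMul (T.1 x) (T.1 y) = T * H.leftMul x y * star T :=
  Subtype.ext <| ContinuousLinearMap.ext fun z => by
    have hT := isTernaryAdjointPair_star T
    calc μ (T.1 x) (T.1 y) z = T.1 (μ x y ((star T).1 z)) := by rw [← hT.apply_ternary H, hT]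

lemma leftMul_cube (x : E) : H.leftMul (μ x x x) (μ x x x) = H.leftMul x x ^ 3 := by
  calc H.leftMul (μ x x x) (μ x x x)
      = H.leftMul x x * H.leftMul x x * star (H.leftMul x x) :=
        leftMul_apply_apply (H.leftMul x x) x x
    _ = H.leftMul x x ^ 3 := by rw [star_leftMul]; noncomm_ring

end IsCStarTernaryProduct

section CStarAlgebra

lemma norm_mul_pow_three_le {A : Type*} [NormedRing A] [StarRing A] [CStarRing A] {a : A}
    (ha : IsSelfAdjoint a) (b : A) : ‖a * b‖ ^ 3 ≤ ‖b‖ ^ 2 * ‖a ^ 3 * b‖ := by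
  have norm_mul_sq_le : ‖a * b‖ ^ 2 ≤ ‖b‖ * ‖a ^ 2 * b‖ :=
    calc ‖a * b‖ ^ 2 = ‖star b * (a ^ 2 * b)‖ := by
          rw [sq, ← CStarRing.norm_star_mul_self, star_mul, ha.star_eq]; noncomm_ring
      _ ≤ ‖b‖ * ‖a ^ 2 * b‖ := (norm_mul_le _ _).trans_eq (by rw [norm_star])
  have norm_sq_mul_sq_le : ‖a ^ 2 * b‖ ^ 2 ≤ ‖a * b‖ * ‖a ^ 3 * b‖ :=
    calc ‖a ^ 2 * b‖ ^ 2 = ‖star (a * b) * (a ^ 3 * b)‖ := by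
          rw [sq, ← CStarRing.norm_star_mul_self, star_mul, star_mul, (ha.pow 2).star_eq,
            ha.star_eq]
          noncomm_ring
      _ ≤ ‖a * b‖ * ‖a ^ 3 * b‖ := (norm_mul_le _ _).trans_eq (by rw [norm_star])
  rcases (norm_nonneg (a * b)).eq_or_lt with hab | hab
  · rw [← hab, zero_pow three_ne_zero]
    positivity
  · refine le_of_mul_le_mul_left ?_ hab
    calc ‖a * b‖ * ‖a * b‖ ^ 3 = (‖a * b‖ ^ 2) ^ 2 := by ring
      _ ≤ (‖b‖ * ‖a ^ 2 * b‖) ^ 2 := by gcongr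
      _ = ‖b‖ ^ 2 * ‖a ^ 2 * b‖ ^ 2 := mul_pow _ _ _
      _ ≤ ‖b‖ ^ 2 * (‖a * b‖ * ‖a ^ 3 * b‖) := by gcongr
      _ = ‖a * b‖ * (‖b‖ ^ 2 * ‖a ^ 3 * b‖) := by ring

lemma exists_isSelfAdjoint_norm_le_one_norm_mul_le {A : Type*} [CStarAlgebra A] {a : A}
    (ha : IsSelfAdjoint a) {ε : ℝ} (hε : 0 < ε) :
    ∃ e b : A, IsSelfAdjoint e ∧ ‖e‖ ≤ 1 ∧ ‖a * e‖ ≤ ε ∧ 1 - e = a * b := by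
  have denom_pos (t : ℝ) : 0 < ε ^ 2 + t ^ 2 := by positivity
  have continuous_cutoff : Continuous fun t : ℝ => ε ^ 2 / (ε ^ 2 + t ^ 2) :=
    continuous_const.div (by fun_prop) fun t => (denom_pos t).ne'
  have continuous_cofactor : Continuous fun t : ℝ => t / (ε ^ 2 + t ^ 2) :=
    continuous_id.div (by fun_prop) fun t => (denom_pos t).ne'
  refine ⟨cfc (fun t : ℝ => ε ^ 2 / (ε ^ 2 + t ^ 2)) a, cfc (fun t : ℝ => t / (ε ^ 2 + t ^ 2)) a,
    cfc_predicate _ _, ?norm_le_one, ?norm_mul_le, ?one_sub_eq⟩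
  case norm_le_one =>
    refine norm_cfc_le zero_le_one fun t _ => ?_
    rw [Real.norm_of_nonneg (by positivity), div_le_one (denom_pos t)]
    exact le_add_of_nonneg_right (sq_nonneg t)
  case norm_mul_le =>
    nth_rewrite 1 [← cfc_id' ℝ a]
    rw [← cfc_mul (fun t : ℝ => t) _ a (by fun_prop) continuous_cutoff.continuousOn]
    refine norm_cfc_le hε.le fun t _ => ?_
    rw [norm_mul, Real.norm_eq_abs, Real.norm_of_nonneg (by positivity), ← mul_div_assoc,
      div_le_iff₀ (denom_pos t)]
    have abs_mul_le : |t| * ε ≤ ε ^ 2 + t ^ 2 := by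
      nlinarith [sq_nonneg (|t| - ε), sq_nonneg (|t| + ε), sq_abs t]
    calc |t| * ε ^ 2 = ε * (|t| * ε) := by ring
      _ ≤ ε * (ε ^ 2 + t ^ 2) := by gcongr
  case one_sub_eq =>
    nth_rewrite 2 [← cfc_id' ℝ a]
    rw [← cfc_mul (fun t : ℝ => t) _ a (by fun_prop) continuous_cofactor.continuousOn,
      ← cfc_one ℝ a,
      ← cfc_sub (1 : ℝ → ℝ) _ a continuousOn_const continuous_cutoff.continuousOn]
    refine cfc_congr fun t _ => ?_
    have := (denom_pos t).ne'
    simp only [Pi.one_apply]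
    field_simp
    ring

end CStarAlgebra

namespace IsCStarTernaryProduct

variable {E : Type*} [NormedAddCommGroup E] [NormedSpace ℂ E] {μ : E → E → E → E}
  {H : IsCStarTernaryProduct μ}

lemma norm_apply_pow_six_le (T : H.adjointable) (x : E) :
    ‖T.1 x‖ ^ 6 ≤ ‖T‖ ^ 5 * ‖H.leftMul (μ x x x) (μ x x x) * star T‖ := by
  have norm_apply_sq_le : ‖T.1 x‖ ^ 2 ≤ ‖T‖ * ‖H.leftMul x x * star T‖ := by
    rw [← norm_leftMul_self (H := H), leftMul_apply_apply, mul_assoc]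
    exact norm_mul_le _ _
  calc ‖T.1 x‖ ^ 6 = (‖T.1 x‖ ^ 2) ^ 3 := by ring
    _ ≤ (‖T‖ * ‖H.leftMul x x * star T‖) ^ 3 := by gcongr
    _ = ‖T‖ ^ 3 * ‖H.leftMul x x * star T‖ ^ 3 := mul_pow _ _ _
    _ ≤ ‖T‖ ^ 3 * (‖star T‖ ^ 2 * ‖H.leftMul x x ^ 3 * star T‖) := by
        gcongr
        exact norm_mul_pow_three_le (isSelfAdjoint_leftMul_self x) _
    _ = ‖T‖ ^ 5 * ‖H.leftMul (μ x x x) (μ x x x) * star T‖ := by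
        rw [norm_star, leftMul_cube]; ring

end IsCStarTernaryProduct

/-- A subspace absorbing the ternary product in each variable, i.e. an ideal up to closedness. -/
def IsTernaryIdeal {E : Type*} [AddCommGroup E] [Module ℂ E] (μ : E → E → E → E)
    (F : Submodule ℂ E) : Prop :=
  ∀ x y z : E, (x ∈ F → μ x y z ∈ F) ∧ (y ∈ F → μ x y z ∈ F) ∧ (z ∈ F → μ x y z ∈ F)

/-- The ternary product induced by `μ` on the quotient by `F`, computed on arbitrarily chosen
representatives; it is independent of that choice when `F` is an ideal. -/
def quotientTernaryProduct {E : Type*} [AddCommGroup E] [Module ℂ E] (μ : E → E → E → E)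
    (F : Submodule ℂ E) (a b c : E ⧸ F) : E ⧸ F :=
  let repr := Function.surjInv F.mkQ_surjective
  Submodule.Quotient.mk (μ (repr a) (repr b) (repr c))

namespace IsTernaryIdeal

section Algebra

variable {E : Type*} [AddCommGroup E] [Module ℂ E] {μ : E → E → E → E} {F : Submodule ℂ E}

lemma ternary_sub_ternary_mem (hF : IsTernaryIdeal μ F) (h : IsTernaryProduct μ)
    {x x' y y' z z' : E}
    (hx : x - x' ∈ F) (hy : y - y' ∈ F) (hz : z - z' ∈ F) : μ x y z - μ x' y' z' ∈ F := by
  have telescope :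
      μ x y z - μ x' y' z' = μ (x - x') y z + μ x' (y - y') z + μ x' y' (z - z') := by
    rw [h.sub_left, h.sub_middle, h.sub_right]
    abel
  rw [telescope]
  exact F.add_mem (F.add_mem ((hF _ _ _).1 hx) ((hF _ _ _).2.1 hy)) ((hF _ _ _).2.2 hz)

lemma quotientTernaryProduct_mk (hF : IsTernaryIdeal μ F) (h : IsTernaryProduct μ) (x y z : E) :
    quotientTernaryProduct μ F (Submodule.Quotient.mk x) (Submodule.Quotient.mk y)
      (Submodule.Quotient.mk z) = Submodule.Quotient.mk (μ x y z) := by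
  have repr_sub_mem (x : E) :
      Function.surjInv F.mkQ_surjective (Submodule.Quotient.mk x) - x ∈ F :=
    (Submodule.Quotient.eq F).mp (Function.surjInv_eq F.mkQ_surjective _)
  exact (Submodule.Quotient.eq F).mpr
    (hF.ternary_sub_ternary_mem h (repr_sub_mem x) (repr_sub_mem y) (repr_sub_mem z))

lemma isTernaryProduct_quotient (hF : IsTernaryIdeal μ F) (h : IsTernaryProduct μ) :
    IsTernaryProduct (quotientTernaryProduct μ F) :=
  h.of_surjective F.mkQ_surjective (hF.quotientTernaryProduct_mk h)

end Algebra

end IsTernaryIdeal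

section QuotientNorm

variable {R E : Type*} [Ring R] [SeminormedAddCommGroup E] [Module R E] {F : Submodule R E}

lemma norm_quotient_mk_eq_sInf (x : E) :
    ‖(Submodule.Quotient.mk x : E ⧸ F)‖ = sInf {s : ℝ | ∃ f ∈ F, s = ‖x + f‖} := by
  refine (quotient_norm_mk_eq F.toAddSubgroup x).trans (congrArg sInf ?_)
  ext s
  simp only [Set.mem_image, Set.mem_ofPred_eq, eq_comm]
  rfl

lemma exists_seq_quotient_mk_eq_tendsto_norm (a : E ⧸ F) :
    ∃ u : ℕ → E, (∀ n, Submodule.Quotient.mk (u n) = a) ∧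
      Tendsto (fun n => ‖u n‖) atTop (𝓝 ‖a‖) := by
  choose u mk_u norm_u_lt using fun n : ℕ =>
    Submodule.Quotient.norm_mk_lt a (Nat.one_div_pos_of_nat (α := ℝ) (n := n))
  have tendsto_upper : Tendsto (fun n : ℕ => ‖a‖ + 1 / ((n : ℝ) + 1)) atTop (𝓝 ‖a‖) := by
    simpa using tendsto_one_div_add_atTop_nhds_zero_nat.const_add ‖a‖
  exact ⟨u, mk_u, tendsto_of_tendsto_of_tendsto_of_le_of_le tendsto_const_nhds tendsto_upper
    (fun n => mk_u n ▸ Submodule.Quotient.norm_mk_le F (u n)) fun n => (norm_u_lt n).le⟩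

end QuotientNorm

namespace IsTernaryIdeal

open IsCStarTernaryProduct

variable {E : Type*} [NormedAddCommGroup E] [NormedSpace ℂ E] {μ : E → E → E → E}
  {F : Submodule ℂ E}

lemma norm_quotientTernaryProduct_le (hF : IsTernaryIdeal μ F) (H : IsCStarTernaryProduct μ)
    (a b c : E ⧸ F) : ‖quotientTernaryProduct μ F a b c‖ ≤ ‖a‖ * ‖b‖ * ‖c‖ := by
  obtain ⟨x, mk_x, norm_x⟩ := exists_seq_quotient_mk_eq_tendsto_norm a
  obtain ⟨y, mk_y, norm_y⟩ := exists_seq_quotient_mk_eq_tendsto_norm b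
  obtain ⟨z, mk_z, norm_z⟩ := exists_seq_quotient_mk_eq_tendsto_norm c
  refine ge_of_tendsto' ((norm_x.mul norm_y).mul norm_z) fun n => ?_
  rw [← mk_x n, ← mk_y n, ← mk_z n, hF.quotientTernaryProduct_mk H.isTernaryProduct]
  exact (Submodule.Quotient.norm_mk_le F _).trans (H.norm_le _ _ _)

lemma norm_quotient_mk_pow_six_le [CompleteSpace E] (hF : IsTernaryIdeal μ F)
    (H : IsCStarTernaryProduct μ) {x w : E} (hw : μ x x x - w ∈ F) {ε : ℝ} (hε : 0 < ε) :
    ‖(Submodule.Quotient.mk x : E ⧸ F)‖ ^ 6 ≤ ‖w‖ ^ 2 + ε := by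
  set L := H.leftMul (μ x x x) (μ x x x)
  set j := L - H.leftMul w w
  have isSelfAdjoint_j : IsSelfAdjoint j :=
    (isSelfAdjoint_leftMul_self _).sub (isSelfAdjoint_leftMul_self w)
  have j_apply_mem (z : E) : j.1 z ∈ F :=
    hF.ternary_sub_ternary_mem H.isTernaryProduct hw hw (by rw [sub_self]; exact F.zero_mem)
  obtain ⟨e, b, he, norm_e, norm_j_mul_e, one_sub_e⟩ :=
    exists_isSelfAdjoint_norm_le_one_norm_mul_le isSelfAdjoint_j hε
  have mk_x : (Submodule.Quotient.mk x : E ⧸ F) = Submodule.Quotient.mk (e.1 x) := by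
    have sub_eq : x - e.1 x = j.1 (b.1 x) := congrArg (fun T : H.adjointable => T.1 x) one_sub_e
    exact (Submodule.Quotient.eq F).mpr (sub_eq ▸ j_apply_mem _)
  calc ‖(Submodule.Quotient.mk x : E ⧸ F)‖ ^ 6 ≤ ‖e.1 x‖ ^ 6 := by
        rw [mk_x]
        gcongr
        exact Submodule.Quotient.norm_mk_le F _
    _ ≤ ‖e‖ ^ 5 * ‖L * star e‖ := norm_apply_pow_six_le e x
    _ ≤ ‖H.leftMul w w * e + j * e‖ := by
        rw [he.star_eq, ← add_mul, add_sub_cancel]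
        exact mul_le_of_le_one_left (norm_nonneg _) (pow_le_one₀ (norm_nonneg _) norm_e)
    _ ≤ ‖H.leftMul w w‖ * ‖e‖ + ‖j * e‖ := norm_add_le_of_le (norm_mul_le _ _) le_rfl
    _ ≤ ‖w‖ ^ 2 * 1 + ε := by rw [norm_leftMul_self]; gcongr
    _ = ‖w‖ ^ 2 + ε := by rw [mul_one]

lemma norm_quotient_mk_cube_le [CompleteSpace E] (hF : IsTernaryIdeal μ F)
    (H : IsCStarTernaryProduct μ) {x w : E} (hw : μ x x x - w ∈ F) :
    ‖(Submodule.Quotient.mk x : E ⧸ F)‖ ^ 3 ≤ ‖w‖ := by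
  refine le_of_pow_le_pow_left₀ two_ne_zero (norm_nonneg w) ?_
  rw [← pow_mul]
  exact le_of_forall_pos_le_add fun ε hε => hF.norm_quotient_mk_pow_six_le H hw hε

theorem isCStarTernaryProduct_quotient [CompleteSpace E] (hF : IsTernaryIdeal μ F)
    (H : IsCStarTernaryProduct μ) : IsCStarTernaryProduct (quotientTernaryProduct μ F) where
  isTernaryProduct := hF.isTernaryProduct_quotient H.isTernaryProduct
  norm_le := hF.norm_quotientTernaryProduct_le H
  norm_cube a := by
    refine le_antisymm ((hF.norm_quotientTernaryProduct_le H a a a).trans_eq (by ring)) ?_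
    obtain ⟨x, rfl⟩ := F.mkQ_surjective a
    obtain ⟨w, mk_w, norm_w⟩ := exists_seq_quotient_mk_eq_tendsto_norm
      (Submodule.Quotient.mk (μ x x x) : E ⧸ F)
    simp only [Submodule.mkQ_apply, hF.quotientTernaryProduct_mk H.isTernaryProduct]
    exact ge_of_tendsto' norm_w fun n =>
      hF.norm_quotient_mk_cube_le H ((Submodule.Quotient.eq F).mp (mk_w n).symm)

end IsTernaryIdeal

/-- Let `E` be a `C*`-ternary ring and `F` a closed ideal of
`E`.  Then the quotient `E/F` with the induced ternary product and the
quotient norm is again a `C*`-ternary ring; in particular the quotient norm is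
a `C*`-norm for the induced ternary product. -/
theorem stmt_18 {E : Type*} [NormedAddCommGroup E] [NormedSpace ℂ E]
    [CompleteSpace E]
    (μ : E → E → E → E) (h : IsTernaryProduct μ)
    (hn : (∀ x y z : E, ‖μ x y z‖ ≤ ‖x‖ * ‖y‖ * ‖z‖) ∧
      ∀ x : E, ‖μ x x x‖ = ‖x‖ ^ 3)
    (F : Submodule ℂ E) (hFclosed : IsClosed (F : Set E))
    (hF : ∀ x y z : E,
      (x ∈ F → μ x y z ∈ F) ∧ (y ∈ F → μ x y z ∈ F) ∧ (z ∈ F → μ x y z ∈ F)) :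
    ∃ μq : (E ⧸ F) → (E ⧸ F) → (E ⧸ F) → E ⧸ F,
      -- `μq` is the induced ternary product on the quotient …
      (∀ x y z : E,
        μq (Submodule.Quotient.mk x) (Submodule.Quotient.mk y)
            (Submodule.Quotient.mk z) = Submodule.Quotient.mk (μ x y z)) ∧
      IsTernaryProduct μq ∧
      -- … the quotient norm `‖x + F‖ = inf{‖x + f‖ : f ∈ F}` is a `C*`-norm
      -- for it …
      (∀ x : E, ‖(Submodule.Quotient.mk x : E ⧸ F)‖ =
        sInf {s : ℝ | ∃ f ∈ F, s = ‖x + f‖}) ∧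
      (∀ a b c : E ⧸ F, ‖μq a b c‖ ≤ ‖a‖ * ‖b‖ * ‖c‖) ∧
      (∀ a : E ⧸ F, ‖μq a a a‖ = ‖a‖ ^ 3) ∧
      (∀ a : E ⧸ F, ‖a‖ = 0 → a = 0) ∧
      -- … and the quotient is a Banach space
      CompleteSpace (E ⧸ F) := by
  have H : IsCStarTernaryProduct μ := ⟨h, hn.1, hn.2⟩
  have hF : IsTernaryIdeal μ F := hF
  have Hq := hF.isCStarTernaryProduct_quotient H
  have eq_zero_of_norm_eq_zero (a : E ⧸ F) (ha : ‖a‖ = 0) : a = 0 :=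
    haveI : IsClosed (F : Set E) := hFclosed
    norm_eq_zero.mp ha
  exact ⟨quotientTernaryProduct μ F, hF.quotientTernaryProduct_mk h, Hq.isTernaryProduct,
    norm_quotient_mk_eq_sInf, Hq.norm_le, Hq.norm_cube, eq_zero_of_norm_eq_zero, inferInstance⟩
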